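/- arXiv:1901.09303 — 2 statements merged into one kernel-verified Lean document; each statement's English description precedes it below -/
import Mathlib

section
/- The family of (M₀) stable laws is identifiable on the interior of the parameter space: if θ, θ' ∈ Θ_M° and θ ≠ θ', then there exists t ∈ ℝ with φ(t;θ) ≠ φ(t;θ'), and consequently the densities f(·;θ) and f(·;θ') are not equal. -/
open MeasureTheory Filter

noncomputable section

def ThetaInt : Set (Fin 4 → ℝ) :=
  {θ | 0 < θ 1 ∧ θ 2 ∈ Set.Ioo (0:ℝ) 2 ∧ θ 3 ∈ Set.Ioo (-1:ℝ) 1}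

/-- Cumulant (log characteristic function) of the continuous (M₀) parameterization,
with `θ = (μ, σ, α, β)`. -/
def psiM (θ : Fin 4 → ℝ) (t : ℝ) : ℂ :=
  if θ 2 = 1 then
    ((-(|θ 1 * t|) : ℝ) : ℂ)
      - Complex.I * (((2 * θ 3 / Real.pi) * (θ 1 * t) * Real.log |θ 1 * t| : ℝ) : ℂ)
      + Complex.I * ((θ 0 * t : ℝ) : ℂ)
  else
    ((-(|θ 1 * t| ^ (θ 2)) : ℝ) : ℂ) *
        (1 + Complex.I * ((θ 3 * Real.sign t * Real.tan (Real.pi * θ 2 / 2)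
            * (|θ 1 * t| ^ (1 - θ 2) - 1) : ℝ) : ℂ))
      + Complex.I * ((θ 0 * t : ℝ) : ℂ)

/-- Characteristic function of the (M₀) parameterization. -/
def phiM (θ : Fin 4 → ℝ) (t : ℝ) : ℂ := Complex.exp (psiM θ t)

/-- Stable density in the (M₀) parameterization, via Fourier inversion. -/
def fM (θ : Fin 4 → ℝ) (x : ℝ) : ℝ :=
  (1 / (2 * Real.pi)) *
    (∫ t : ℝ, Complex.exp (-Complex.I * (t : ℂ) * (x : ℂ)) * phiM θ t).re

/-- Partial derivative of the density in parameter `i`. -/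
def fP (i : Fin 4) (θ : Fin 4 → ℝ) (x : ℝ) : ℝ :=
  deriv (fun s => fM (Function.update θ i s) x) (θ i)

/-- Second partial derivative of the density in parameters `i`, `j`. -/
def fPP (i j : Fin 4) (θ : Fin 4 → ℝ) (x : ℝ) : ℝ :=
  deriv (fun s => fP i (Function.update θ j s) x) (θ j)

/-- Derivative of the density in `x`. -/
def fX (θ : Fin 4 → ℝ) (x : ℝ) : ℝ := deriv (fun y => fM θ y) x

/-- Mixed derivative `∂²f/∂x∂θᵢ`. -/
def fPX (i : Fin 4) (θ : Fin 4 → ℝ) (x : ℝ) : ℝ := deriv (fun y => fP i θ y) x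

/-- Score functions. -/
def ellP (i : Fin 4) (θ : Fin 4 → ℝ) (x : ℝ) : ℝ := fP i θ x / fM θ x

/-- Derivative of the score in `x`. -/
def ellPX (i : Fin 4) (θ : Fin 4 → ℝ) (x : ℝ) : ℝ := deriv (fun y => ellP i θ y) x

/-- Derivative of the score `ℓ_{θᵢ}` in the parameter `θⱼ`. -/
def ellPP (i j : Fin 4) (θ : Fin 4 → ℝ) (x : ℝ) : ℝ :=
  deriv (fun s => ellP i (Function.update θ j s) x) (θ j)

/-- `h = O(r)` as `|x| → ∞`. -/
def IsBigOAtInfty (h r : ℝ → ℝ) : Prop :=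
  ∃ c > 0, ∃ M > 0, ∀ x : ℝ, M ≤ |x| → |h x| ≤ c * r x


end

/-!
Write `x = σt`. The cumulant is `ψ(t) = -|x|^α + i (μt + β k_α(x))`, where the skewness phase
`k_α(x)` is `tan(πα/2) (x |x|^(α-1) - x)` for `α ≠ 1` and `-(2/π) x log |x|` for `α = 1`. For
`α > 0` it is continuous in `t` and vanishes at `0`, so `ψ` is the unique continuous logarithm of
`φ` normalised at `0`, and is therefore determined by `φ`. Its real part at `t = 1/σ` and `t = 2/σ`
gives `σ` and `α`; then `k_α(1) = 0` makes the imaginary part at `t = 1/σ` give `μ`, and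
`k_α(2) ≠ 0` makes the one at `t = 2/σ` give `β`. Finally `f` is, up to scaling, the Fourier
transform of `φ`, and the Fourier transform is injective on continuous integrable functions.
-/

open FourierTransform ComplexConjugate

theorem eq_and_eq_of_abs_mul_rpow_eq {σ σ' α α' : ℝ} (hσ : 0 < σ) (hσ' : 0 < σ') (hα' : α' ≠ 0)
    (h : ∀ t : ℝ, |σ * t| ^ α = |σ' * t| ^ α') : σ = σ' ∧ α = α' := by
  have hscale : σ = σ' := by
    have hratio : (σ' * σ⁻¹) ^ α' = 1 := by
      have hpos : 0 < σ' * σ⁻¹ := by positivity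
      simpa [hσ.ne', abs_of_pos hpos] using (h σ⁻¹).symm
    rw [← Real.one_rpow α', Real.rpow_left_inj (by positivity) zero_le_one hα'] at hratio
    exact (eq_of_mul_inv_eq_one hratio).symm
  subst hscale
  refine ⟨rfl, ?_⟩
  have hpow : (2 : ℝ) ^ α = 2 ^ α' := by
    simpa [mul_inv_cancel_left₀ hσ.ne'] using h (σ⁻¹ * 2)
  exact (Real.rpow_right_inj two_pos (by norm_num)).1 hpow

theorem continuous_mul_abs_rpow_sub_one {p : ℝ} (hp : 0 < p) :
    Continuous fun x : ℝ ↦ x * |x| ^ (p - 1) := by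
  have hp₁ : 1 < p + 1 := by linarith
  have hderiv : deriv (fun x : ℝ ↦ ‖x‖ ^ (p + 1)) = fun x ↦ (p + 1) * (x * |x| ^ (p - 1)) := by
    ext x
    rw [(hasDerivAt_norm_rpow x hp₁).deriv, Real.norm_eq_abs, show p + 1 - 2 = p - 1 by ring]
    ring
  have hcont := (contDiff_norm_rpow (E := ℝ) hp₁).continuous_deriv le_rfl
  rw [hderiv] at hcont
  simpa [inv_mul_cancel_left₀ (by positivity : p + 1 ≠ 0)] using hcont.const_mul (p + 1)⁻¹

theorem integrable_exp_neg_abs_mul_rpow {σ α : ℝ} (hσ : σ ≠ 0) (hα : 0 < α) :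
    Integrable fun t : ℝ ↦ Real.exp (-|σ * t| ^ α) := by
  refine Integrable.comp_mul_left' (g := fun x : ℝ ↦ Real.exp (-|x| ^ α)) ?_ hσ
  refine (integrable_fun_norm_addHaar volume (f := fun r ↦ Real.exp (-r ^ α))).2 ?_
  simpa using integrableOn_rpow_mul_exp_neg_rpow (s := 0) (by norm_num) hα

theorem eq_of_exp_eq_of_continuous {X : Type*} [TopologicalSpace X] [PreconnectedSpace X]
    {f g : X → ℂ} (hf : Continuous f) (hg : Continuous g)
    (hexp : ∀ x, Complex.exp (f x) = Complex.exp (g x)) (x₀ : X) (hx₀ : f x₀ = g x₀) : f = g :=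
  Complex.isCoveringMap_exp.eq_of_comp_eq hf hg (funext fun x ↦ Subtype.ext (hexp x)) x₀ hx₀

section Fourier

variable {V : Type*} [NormedAddCommGroup V] [InnerProductSpace ℝ V] [MeasurableSpace V]
  [BorelSpace V] [FiniteDimensional ℝ V]

theorem fourier_sub_of_integrable {E : Type*} [NormedAddCommGroup E] [NormedSpace ℂ E]
    {f g : V → E} (hf : Integrable f) (hg : Integrable g) : 𝓕 (f - g) = 𝓕 f - 𝓕 g := by
  ext w
  simp only [Real.fourier_eq, Pi.sub_apply, smul_sub]
  exact integral_sub ((Real.fourierIntegral_convergent_iff w).2 hf)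
    ((Real.fourierIntegral_convergent_iff w).2 hg)

theorem eq_of_fourier_eq {E : Type*} [NormedAddCommGroup E] [NormedSpace ℂ E] [CompleteSpace E]
    {f g : V → E} (hf : Continuous f) (hg : Continuous g) (hfi : Integrable f)
    (hgi : Integrable g) (h : 𝓕 f = 𝓕 g) : f = g := by
  have hzero : 𝓕 (f - g) = 0 := by rw [fourier_sub_of_integrable hfi hgi, h, sub_self]
  have hinv : 𝓕⁻ (𝓕 (f - g)) = f - g :=
    (hf.sub hg).fourierInv_fourier_eq (hfi.sub hgi) (hzero ▸ integrable_zero V E volume)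
  rw [← sub_eq_zero, ← hinv, hzero]
  ext w
  simp [Real.fourierInv_eq]

theorem conj_fourier_of_map_neg_eq_conj {f : V → ℂ} (hf : ∀ v, f (-v) = conj (f v)) (w : V) :
    conj (𝓕 f w) = 𝓕 f w := by
  simp only [Real.fourier_eq', ← integral_conj]
  rw [← integral_neg_eq_self]
  congr 1
  ext v
  simp [hf, ← Complex.exp_conj, Complex.conj_ofNat]

end Fourier

/-- The skewness phase `k_α` of a stable law: `β k_α(σt)` is the contribution of the skewness `β` to
the imaginary part of the cumulant at `t`. The odd power `sign(x) |x|^α` is written `x |x|^(α-1)`,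
with value `0` at `x = 0`. -/
noncomputable def skewPhase (α x : ℝ) : ℝ :=
  if α = 1 then -(2 / Real.pi) * (x * Real.log |x|)
  else Real.tan (Real.pi * α / 2) * (x * |x| ^ (α - 1) - x)

theorem skewPhase_one_right (α : ℝ) : skewPhase α 1 = 0 := by simp [skewPhase]

theorem skewPhase_neg (α x : ℝ) : skewPhase α (-x) = -skewPhase α x := by
  unfold skewPhase
  split_ifs <;> rw [abs_neg] <;> ring

theorem continuous_skewPhase {α : ℝ} (hα : 0 < α) : Continuous (skewPhase α) := by
  unfold skewPhase
  split_ifs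
  · simpa only [Real.log_abs] using Real.continuous_mul_log.const_mul _
  · exact ((continuous_mul_abs_rpow_sub_one hα).sub continuous_id).const_mul _

theorem skewPhase_two_ne_zero {α : ℝ} (hα : α = 1 ∨ Real.tan (Real.pi * α / 2) ≠ 0) :
    skewPhase α 2 ≠ 0 := by
  unfold skewPhase
  split_ifs with h₁
  · simp [Real.pi_ne_zero, (Real.log_pos one_lt_two).ne']
  · refine mul_ne_zero (hα.resolve_left h₁) fun h ↦ h₁ ?_
    have hpow : (2 : ℝ) ^ (α - 1) = 2 ^ (0 : ℝ) := by
      rw [abs_two] at h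
      rw [Real.rpow_zero]
      linarith
    linarith [(Real.rpow_right_inj two_pos (by norm_num)).1 hpow]

theorem tan_pi_mul_div_two_ne_zero {α : ℝ} (hα : α ∈ Set.Ioo (0 : ℝ) 2) (h₁ : α ≠ 1) :
    Real.tan (Real.pi * α / 2) ≠ 0 := by
  rw [Ne, Real.tan_eq_zero_iff]
  rintro ⟨k, hk⟩
  obtain rfl : (k : ℝ) = α := mul_right_cancel₀ Real.pi_ne_zero (by linarith)
  obtain ⟨hpos, hlt⟩ := hα
  norm_cast at hpos hlt
  exact h₁ (by exact_mod_cast (by lia : k = 1))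

theorem abs_rpow_mul_sign_mul_abs_rpow_sub_one (α x : ℝ) :
    |x| ^ α * (Real.sign x * (|x| ^ (1 - α) - 1)) = x - x * |x| ^ (α - 1) := by
  rcases eq_or_ne x 0 with rfl | hx
  · simp
  have hpos : 0 < |x| := abs_pos.2 hx
  have hsign : Real.sign x * |x| = x := by
    rcases hx.lt_or_gt with hx | hx
    · rw [Real.sign_of_neg hx, abs_of_neg hx, neg_one_mul, neg_neg]
    · rw [Real.sign_of_pos hx, abs_of_pos hx, one_mul]
  have hadd : |x| ^ α * |x| ^ (1 - α) = |x| := by rw [← Real.rpow_add hpos]; simp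
  have hsub : |x| ^ α = |x| * |x| ^ (α - 1) := by
    rw [Real.rpow_sub_one hpos.ne', mul_div_cancel₀ _ hpos.ne']
  calc |x| ^ α * (Real.sign x * (|x| ^ (1 - α) - 1))
      = Real.sign x * (|x| ^ α * |x| ^ (1 - α) - |x| ^ α) := by ring
    _ = Real.sign x * |x| - Real.sign x * |x| * |x| ^ (α - 1) := by rw [hadd, hsub]; ring
    _ = x - x * |x| ^ (α - 1) := by rw [hsign]

theorem sign_mul_of_pos_left {a : ℝ} (ha : 0 < a) (x : ℝ) : Real.sign (a * x) = Real.sign x := by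
  simp [Real.sign, mul_neg_iff, ha, ha.not_gt]

theorem psiM_eq {θ : Fin 4 → ℝ} (hσ : 0 < θ 1) (t : ℝ) :
    psiM θ t = ((-|θ 1 * t| ^ θ 2 : ℝ) : ℂ) +
      ((θ 0 * t + θ 3 * skewPhase (θ 2) (θ 1 * t) : ℝ) : ℂ) * Complex.I := by
  unfold psiM skewPhase
  split_ifs with h
  · rw [h, Real.rpow_one]
    push_cast
    ring
  · have hskew := congrArg ((↑) : ℝ → ℂ) (abs_rpow_mul_sign_mul_abs_rpow_sub_one (θ 2) (θ 1 * t))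
    rw [sign_mul_of_pos_left hσ] at hskew
    push_cast at hskew ⊢
    linear_combination -Complex.I * θ 3 * Complex.tan (Real.pi * θ 2 / 2) * hskew

theorem psiM_re {θ : Fin 4 → ℝ} (hσ : 0 < θ 1) (t : ℝ) : (psiM θ t).re = -|θ 1 * t| ^ θ 2 := by
  simp [psiM_eq hσ, -Complex.ofReal_neg, -Complex.ofReal_add]

theorem psiM_im {θ : Fin 4 → ℝ} (hσ : 0 < θ 1) (t : ℝ) :
    (psiM θ t).im = θ 0 * t + θ 3 * skewPhase (θ 2) (θ 1 * t) := by
  simp [psiM_eq hσ]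

theorem psiM_zero {θ : Fin 4 → ℝ} (hα : θ 2 ≠ 0) : psiM θ 0 = 0 := by
  simp [psiM, Real.zero_rpow hα]

theorem continuous_psiM {θ : Fin 4 → ℝ} (hσ : 0 < θ 1) (hα : 0 < θ 2) : Continuous (psiM θ) := by
  have hskew := continuous_skewPhase hα
  have hrpow := Real.continuous_rpow_const hα.le
  simp only [funext (psiM_eq hσ)]
  fun_prop

theorem psiM_neg {θ : Fin 4 → ℝ} (hσ : 0 < θ 1) (t : ℝ) : psiM θ (-t) = conj (psiM θ t) := by
  apply Complex.ext
  · rw [Complex.conj_re, psiM_re hσ, psiM_re hσ, mul_neg, abs_neg]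
  · rw [Complex.conj_im, psiM_im hσ, psiM_im hσ, mul_neg (θ 1), skewPhase_neg]
    ring

theorem eq_of_psiM_eq {θ θ' : Fin 4 → ℝ} (hσ : 0 < θ 1)
    (hskew : θ 2 = 1 ∨ Real.tan (Real.pi * θ 2 / 2) ≠ 0) (hσ' : 0 < θ' 1) (hα' : θ' 2 ≠ 0)
    (h : psiM θ = psiM θ') : θ = θ' := by
  obtain ⟨hσeq, hαeq⟩ : θ 1 = θ' 1 ∧ θ 2 = θ' 2 :=
    eq_and_eq_of_abs_mul_rpow_eq hσ hσ' hα' fun t ↦ by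
      simpa [psiM_re hσ, psiM_re hσ'] using congrArg Complex.re (congrFun h t)
  have him (x : ℝ) : θ 0 * ((θ 1)⁻¹ * x) + θ 3 * skewPhase (θ 2) x =
      θ' 0 * ((θ 1)⁻¹ * x) + θ' 3 * skewPhase (θ 2) x := by
    have := congrArg Complex.im (congrFun h ((θ 1)⁻¹ * x))
    rwa [psiM_im hσ, psiM_im hσ', ← hσeq, ← hαeq, mul_inv_cancel_left₀ hσ.ne'] at this
  have hμeq : θ 0 = θ' 0 := by simpa [skewPhase_one_right, hσ.ne'] using him 1
  have hβeq : θ 3 = θ' 3 := by simpa [hμeq, skewPhase_two_ne_zero hskew] using him 2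
  ext i
  fin_cases i <;> assumption

theorem psiM_eq_of_phiM_eq {θ θ' : Fin 4 → ℝ} (hσ : 0 < θ 1) (hα : 0 < θ 2) (hσ' : 0 < θ' 1)
    (hα' : 0 < θ' 2) (h : phiM θ = phiM θ') : psiM θ = psiM θ' :=
  eq_of_exp_eq_of_continuous (continuous_psiM hσ hα) (continuous_psiM hσ' hα') (congrFun h) 0
    (by rw [psiM_zero hα.ne', psiM_zero hα'.ne'])

theorem continuous_phiM {θ : Fin 4 → ℝ} (hσ : 0 < θ 1) (hα : 0 < θ 2) : Continuous (phiM θ) :=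
  (continuous_psiM hσ hα).cexp

theorem integrable_phiM {θ : Fin 4 → ℝ} (hσ : 0 < θ 1) (hα : 0 < θ 2) : Integrable (phiM θ) := by
  rw [← integrable_norm_iff (continuous_phiM hσ hα).aestronglyMeasurable]
  simpa only [phiM, Complex.norm_exp, psiM_re hσ] using integrable_exp_neg_abs_mul_rpow hσ.ne' hα

theorem phiM_neg {θ : Fin 4 → ℝ} (hσ : 0 < θ 1) (t : ℝ) : phiM θ (-t) = conj (phiM θ t) := by
  rw [phiM, phiM, psiM_neg hσ, Complex.exp_conj]

theorem fourier_phiM {θ : Fin 4 → ℝ} (hσ : 0 < θ 1) (w : ℝ) :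
    𝓕 (phiM θ) w = ((2 * Real.pi * fM θ (2 * Real.pi * w) : ℝ) : ℂ) := by
  have hintegral : 𝓕 (phiM θ) w =
      ∫ t : ℝ, Complex.exp (-Complex.I * t * (2 * Real.pi * w : ℝ)) * phiM θ t := by
    rw [Real.fourier_real_eq_integral_exp_smul]
    congr! 4
    push_cast
    ring
  have hreal := Complex.conj_eq_iff_re.1 (conj_fourier_of_map_neg_eq_conj (phiM_neg hσ) w)
  rw [← hreal, fM, ← hintegral]
  congr 1
  field_simp

theorem phiM_eq_of_fM_eq {θ θ' : Fin 4 → ℝ} (hσ : 0 < θ 1) (hα : 0 < θ 2) (hσ' : 0 < θ' 1)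
    (hα' : 0 < θ' 2) (h : fM θ = fM θ') : phiM θ = phiM θ' :=
  eq_of_fourier_eq (continuous_phiM hσ hα) (continuous_phiM hσ' hα') (integrable_phiM hσ hα)
    (integrable_phiM hσ' hα') (funext fun w ↦ by rw [fourier_phiM hσ, fourier_phiM hσ', h])

theorem stable_identifiable_general {θ θ' : Fin 4 → ℝ} (hσ : 0 < θ 1) (hα : 0 < θ 2)
    (hskew : θ 2 = 1 ∨ Real.tan (Real.pi * θ 2 / 2) ≠ 0) (hσ' : 0 < θ' 1) (hα' : 0 < θ' 2)
    (hne : θ ≠ θ') : (∃ t : ℝ, phiM θ t ≠ phiM θ' t) ∧ fM θ ≠ fM θ' := by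
  have hphi : phiM θ ≠ phiM θ' := fun h ↦
    hne (eq_of_psiM_eq hσ hskew hσ' hα'.ne' (psiM_eq_of_phiM_eq hσ hα hσ' hα' h))
  exact ⟨Function.ne_iff.1 hphi, fun h ↦ hphi (phiM_eq_of_fM_eq hσ hα hσ' hα' h)⟩

/-- Identifiability of the (M₀) family on the interior of the parameter
space: distinct parameters yield distinct characteristic functions, and consequently
distinct densities. -/
theorem stable_identifiable :
    ∀ θ ∈ ThetaInt, ∀ θ' ∈ ThetaInt, θ ≠ θ' →
      (∃ t : ℝ, phiM θ t ≠ phiM θ' t) ∧ fM θ ≠ fM θ' := by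
  intro θ hθ θ' hθ' hne
  exact stable_identifiable_general hθ.1 hθ.2.1.1
    (or_iff_not_imp_left.2 (tan_pi_mul_div_two_ne_zero hθ.2.1)) hθ'.1 hθ'.2.1.1 hne
end

section
/- Fix μ ∈ ℝ, σ > 0, β ∈ (−1,1). There exist ε ∈ (0,1) and a Lebesgue-integrable function h : ℝ → [0,∞) such that for every α with |α − 1| < ε, α ∈ (0,2), and every t ≠ 0, one has |φ_α(t;μ,σ,α,β)| ≤ h(t), where φ_α = ∂φ/∂α (interpreted at α = 1 as the limit of the α ≠ 1 derivative, which exists). Analogous integrable dominating functions on a neighborhood of α = 1 exist for each first partial derivative φ_{θi}(t), for t·φ_{θi}(t), and for each second partial derivative φ_{θiθj}(t), θ_i, θ_j ∈ {μ,σ,α,β}. -/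
open MeasureTheory Filter

noncomputable section

/-- Partial derivative of the characteristic function `φ` in the parameter `θᵢ`
(at `α = 1` this is the limit of the `α ≠ 1` derivative). -/
def phiP (i : Fin 4) (θ : Fin 4 → ℝ) (t : ℝ) : ℂ :=
  deriv (fun s => phiM (Function.update θ i s) t) (θ i)

/-- Second partial derivative of the characteristic function `φ` in parameters `θᵢ, θⱼ`. -/
def phiPP (i j : Fin 4) (θ : Fin 4 → ℝ) (t : ℝ) : ℂ :=
  deriv (fun s => phiP i (Function.update θ j s) t) (θ j)

end

/-!
The only obstruction to smoothness of the cumulant in `α` is the pole of `tan (π α / 2)` at `α = 1`.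
It is removable: with `L = log |σ t|`, the cumulant of `φ` is
`i μ t - exp (α L) + i β sign(t) · (α - 1) tan (π α / 2) · (exp (α L) - exp L) / (α - 1)`,
and both of the last two factors extend analytically across `α = 1`. Thus for each `t ≠ 0` the
cumulant is analytic in complex parameters with `0 < re σ` and `0 < re α < 2`, where it is bounded
by a constant, locally uniform in the parameters, times `(1 + |t|) ^ 3`. By Cauchy's estimate its
first and second partial derivatives obey bounds of the same shape. The derivatives of `φ` are `φ`
times polynomials in these, and `|φ| = exp (-|σ t| ^ α)` decays fast enough, uniformly for
parameters in a compact set, to make the majorant integrable.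
-/

section PartialDerivatives

variable {ι : Type*} [DecidableEq ι]

lemma hasDerivAt_ofReal_comp_update (θ : ι → ℝ) (i : ι) :
    HasDerivAt (fun s : ℝ => Complex.ofReal ∘ Function.update θ i s) (Pi.single i 1) (θ i) := by
  refine hasDerivAt_pi.2 fun k => ?_
  have hk := (hasDerivAt_pi.1 (hasDerivAt_update θ i (θ i)) k).ofReal_comp
  rcases eq_or_ne k i with rfl | hki
  · simpa using hk
  · simpa [hki] using hk

/-- The partial derivative `∂f/∂zᵢ` of a function of several complex variables. -/
noncomputable def complexPartial (i : ι) (f : (ι → ℂ) → ℂ) (z : ι → ℂ) : ℂ :=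
  fderiv ℂ f z (Pi.single i 1)

lemma analyticOnNhd_complexPartial [Fintype ι] {f : (ι → ℂ) → ℂ} {Ω : Set (ι → ℂ)}
    (hf : AnalyticOnNhd ℂ f Ω) (i : ι) : AnalyticOnNhd ℂ (complexPartial i f) Ω :=
  (ContinuousLinearMap.apply ℂ ℂ (Pi.single i 1 : ι → ℂ)).comp_analyticOnNhd hf.fderiv

lemma complexPartial_cexp_comp [Finite ι] {f : (ι → ℂ) → ℂ} {z : ι → ℂ}
    (hf : DifferentiableAt ℂ f z) (i : ι) :
    complexPartial i (fun w => Complex.exp (f w)) z = Complex.exp (f z) * complexPartial i f z := by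
  have := Fintype.ofFinite ι
  simp [complexPartial, hf.hasFDerivAt.cexp.fderiv]

lemma complexPartial_mul [Finite ι] {f g : (ι → ℂ) → ℂ} {z : ι → ℂ}
    (hf : DifferentiableAt ℂ f z) (hg : DifferentiableAt ℂ g z) (i : ι) :
    complexPartial i (f * g) z = f z * complexPartial i g z + complexPartial i f z * g z := by
  have := Fintype.ofFinite ι
  simp [complexPartial, fderiv_mul hf hg, mul_comm]

lemma hasDerivAt_update_of_eqOn_comp_ofReal [Finite ι] {f : (ι → ℂ) → ℂ} {g : (ι → ℝ) → ℂ}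
    {Ω : Set (ι → ℂ)} (hΩ : IsOpen Ω) (hf : DifferentiableOn ℂ f Ω)
    (hgf : ∀ θ : ι → ℝ, Complex.ofReal ∘ θ ∈ Ω → g θ = f (Complex.ofReal ∘ θ)) {θ : ι → ℝ}
    (hθ : Complex.ofReal ∘ θ ∈ Ω) (i : ι) :
    HasDerivAt (fun s => g (Function.update θ i s)) (complexPartial i f (Complex.ofReal ∘ θ))
      (θ i) := by
  have := Fintype.ofFinite ι
  have hcurve := hasDerivAt_ofReal_comp_update θ i
  have hfderiv : HasFDerivAt f ((fderiv ℂ f (Complex.ofReal ∘ θ)).restrictScalars ℝ)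
      (Complex.ofReal ∘ Function.update θ i (θ i)) := by
    rw [Function.update_eq_self]
    exact (hf.differentiableAt (hΩ.mem_nhds hθ)).hasFDerivAt.restrictScalars ℝ
  refine (hfderiv.comp_hasDerivAt (θ i) hcurve).congr_of_eventuallyEq ?_
  have hnhds : Ω ∈ nhds (Complex.ofReal ∘ Function.update θ i (θ i)) := by
    rw [Function.update_eq_self]
    exact hΩ.mem_nhds hθ
  filter_upwards [hcurve.continuousAt hnhds] with s hs using hgf _ hs

lemma norm_complexPartial_le [Fintype ι] {f : (ι → ℂ) → ℂ} {c : ι → ℂ} {R M : ℝ} (hR : 0 < R)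
    (hf : DifferentiableOn ℂ f (Metric.ball c R)) (hM : ∀ z ∈ Metric.ball c R, ‖f z‖ ≤ M) (i : ι) :
    ‖complexPartial i f c‖ ≤ 2 * M / R := by
  have hmaps : Set.MapsTo f (Metric.ball c R) (Metric.closedBall (f c) (2 * M)) := fun z hz => by
    rw [mem_closedBall_iff_norm, two_mul]
    exact norm_sub_le_of_le (hM z hz) (hM c (Metric.mem_ball_self hR))
  calc ‖complexPartial i f c‖ ≤ ‖fderiv ℂ f c‖ * ‖(Pi.single i 1 : ι → ℂ)‖ :=
        ContinuousLinearMap.le_opNorm _ _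
    _ = ‖fderiv ℂ f c‖ := by rw [Pi.norm_single, norm_one, mul_one]
    _ ≤ 2 * M / R := Complex.norm_fderiv_le_div_of_mapsTo_ball hf hmaps hR

end PartialDerivatives

section LocalDomination

/-- The family `F` is dominated by the weight `w`, locally uniformly on `Ω`: on each compact subset
of `Ω` one constant serves for all `t`. Cauchy's estimate transfers this to partial derivatives. -/
def IsLocallyDominated {T E : Type*} [TopologicalSpace E] (F : T → E → ℂ) (w : T → ℝ)
    (Ω : Set E) : Prop :=
  ∀ K ⊆ Ω, IsCompact K → ∃ C : ℝ, 0 ≤ C ∧ ∀ t, ∀ z ∈ K, ‖F t z‖ ≤ C * w t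

lemma isLocallyDominated_of_le_mul {T E : Type*} [TopologicalSpace E] {F : T → E → ℂ} {w : T → ℝ}
    {Ω : Set E} {B : E → ℝ} (hB : ContinuousOn B Ω) (hw : ∀ t, 0 ≤ w t)
    (hF : ∀ t, ∀ z ∈ Ω, ‖F t z‖ ≤ B z * w t) : IsLocallyDominated F w Ω := by
  intro K hKΩ hK
  obtain ⟨C, hC⟩ := hK.exists_bound_of_continuousOn (hB.mono hKΩ)
  refine ⟨max C 0, le_max_right C 0, fun t z hz => (hF t z (hKΩ hz)).trans ?_⟩
  have hBC : B z ≤ max C 0 := (le_abs_self _).trans ((hC z hz).trans (le_max_left C 0))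
  exact mul_le_mul_of_nonneg_right hBC (hw t)

lemma IsLocallyDominated.partialDeriv {ι T : Type*} [Finite ι] [DecidableEq ι]
    {F : T → (ι → ℂ) → ℂ} {w : T → ℝ} {Ω : Set (ι → ℂ)} (hF : IsLocallyDominated F w Ω)
    (hΩ : IsOpen Ω) (hdiff : ∀ t, DifferentiableOn ℂ (F t) Ω) :
    IsLocallyDominated (fun q : ι × T => complexPartial q.1 (F q.2)) (fun q => w q.2) Ω := by
  have := Fintype.ofFinite ι
  intro K hKΩ hK
  obtain ⟨δ, hδ, hδΩ⟩ := hK.exists_cthickening_subset_open hΩ hKΩ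
  obtain ⟨C, hC0, hC⟩ := hF _ hδΩ hK.cthickening
  refine ⟨2 * C / δ, by positivity, fun ⟨i, t⟩ z hz => ?_⟩
  have hball : Metric.ball z δ ⊆ Metric.cthickening δ K :=
    Metric.ball_subset_closedBall.trans (Metric.closedBall_subset_cthickening hz δ)
  calc ‖complexPartial i (F t) z‖ ≤ 2 * (C * w t) / δ :=
        norm_complexPartial_le hδ ((hdiff t).mono (hball.trans hδΩ))
          (fun y hy => hC t y (hball hy)) i
    _ = 2 * C / δ * w t := by ring

end LocalDomination

section RegularizedFactors

lemma analyticAt_dslope_of_differentiable {f : ℂ → ℂ} (hf : Differentiable ℂ f) (c z : ℂ) :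
    AnalyticAt ℂ (dslope f c) z := by
  have hd : DifferentiableOn ℂ (dslope f c) Set.univ :=
    (Complex.differentiableOn_dslope Filter.univ_mem).2 hf.differentiableOn
  exact hd.analyticAt Filter.univ_mem

lemma norm_dslope_le_of_convex {f : ℂ → ℂ} {s : Set ℂ} (hs : Convex ℝ s) {C : ℝ}
    (hf : ∀ z ∈ s, DifferentiableAt ℂ f z) (hC : ∀ z ∈ s, ‖deriv f z‖ ≤ C) {a z : ℂ}
    (ha : a ∈ s) (hz : z ∈ s) : ‖dslope f a z‖ ≤ C := by
  rcases eq_or_ne z a with rfl | hne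
  · simpa using hC _ hz
  · rw [dslope_of_ne _ hne, slope_def_field, norm_div,
      div_le_iff₀ (norm_pos_iff.2 (sub_ne_zero.2 hne))]
    exact hs.norm_image_sub_le_of_norm_deriv_le hf hC ha hz

lemma norm_dslope_exp_zero_le (z : ℂ) : ‖dslope Complex.exp 0 z‖ ≤ 1 + ‖Complex.exp z‖ := by
  have hconv : Convex ℝ {w : ℂ | w.re ≤ max 0 z.re} := convex_halfSpace_re_le _
  have hexp (w : ℂ) (hw : w.re ≤ max 0 z.re) : ‖deriv Complex.exp w‖ ≤ 1 + ‖Complex.exp z‖ := by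
    rw [Complex.deriv_exp, Complex.norm_exp, Complex.norm_exp]
    rcases le_max_iff.1 hw with h | h
    · linarith [Real.exp_le_one_iff.2 h, Real.exp_pos z.re]
    · linarith [Real.exp_le_exp.2 h]
  exact norm_dslope_le_of_convex hconv (fun w _ => Complex.differentiableAt_exp) hexp (by simp)
    (by simp)

/-- The secant slope `(exp (a * L) - exp L) / (a - 1)`, extended analytically to `a = 1`. -/
noncomputable def expSecant (a L : ℂ) : ℂ :=
  L * Complex.exp L * dslope Complex.exp 0 ((a - 1) * L)

lemma expSecant_one (L : ℂ) : expSecant 1 L = L * Complex.exp L := by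
  simp [expSecant]

lemma sub_one_mul_expSecant (a L : ℂ) :
    (a - 1) * expSecant a L = Complex.exp (a * L) - Complex.exp L := by
  have hslope : (a - 1) * L * dslope Complex.exp 0 ((a - 1) * L) =
      Complex.exp ((a - 1) * L) - 1 := by
    simpa using sub_smul_dslope Complex.exp 0 ((a - 1) * L)
  have hexp : Complex.exp (a * L) = Complex.exp L * Complex.exp ((a - 1) * L) := by
    rw [← Complex.exp_add]; ring_nf
  rw [expSecant, hexp]
  linear_combination Complex.exp L * hslope

lemma norm_expSecant_le (a L : ℂ) :
    ‖expSecant a L‖ ≤ ‖L * Complex.exp L‖ + ‖L * Complex.exp (a * L)‖ := by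
  calc ‖expSecant a L‖
      ≤ ‖L * Complex.exp L‖ * (1 + ‖Complex.exp ((a - 1) * L)‖) := by
        rw [expSecant, norm_mul]
        gcongr
        exact norm_dslope_exp_zero_le _
    _ = ‖L * Complex.exp L‖ + ‖L * Complex.exp (L + (a - 1) * L)‖ := by
        rw [Complex.exp_add, ← mul_assoc, norm_mul (L * Complex.exp L), mul_add, mul_one]
    _ = ‖L * Complex.exp L‖ + ‖L * Complex.exp (a * L)‖ := by ring_nf

lemma analyticAt_expSecant {E : Type*} [NormedAddCommGroup E] [NormedSpace ℂ E] {a L : E → ℂ}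
    {z : E} (ha : AnalyticAt ℂ a z) (hL : AnalyticAt ℂ L z) :
    AnalyticAt ℂ (fun w => expSecant (a w) (L w)) z :=
  (hL.mul hL.cexp).mul <| (analyticAt_dslope_of_differentiable Complex.differentiable_exp 0
    ((a z - 1) * L z)).comp_of_eq ((ha.sub analyticAt_const).mul hL) rfl

/-- `(a - 1) * tan (π a / 2)`, extended analytically to `a = 1`: the zero of the numerator cancels
the pole of the tangent. -/
noncomputable def regularizedTan (a : ℂ) : ℂ :=
  Complex.sin (Real.pi * a / 2) / dslope (fun z => Complex.cos (Real.pi * z / 2)) 1 a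

lemma regularizedTan_one : regularizedTan 1 = -(2 / Real.pi) := by
  have hderiv : HasDerivAt (fun z : ℂ => Complex.cos (Real.pi * z / 2)) (-(Real.pi / 2)) 1 := by
    have hlin : HasDerivAt (fun z : ℂ => Real.pi * z / 2) (Real.pi / 2) 1 := by
      simpa using ((hasDerivAt_id (1 : ℂ)).const_mul (Real.pi : ℂ)).div_const 2
    simpa using hlin.ccos
  simp [regularizedTan, dslope_same, hderiv.deriv]

lemma regularizedTan_of_ne_one {a : ℂ} (ha : a ≠ 1) :
    regularizedTan a = (a - 1) * Complex.tan (Real.pi * a / 2) := by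
  rw [regularizedTan, dslope_of_ne _ ha, slope_def_field, mul_one, Complex.cos_pi_div_two, sub_zero,
    div_div_eq_mul_div, Complex.tan_eq_sin_div_cos]
  ring

lemma cos_pi_mul_div_two_ne_zero {a : ℂ} (ha : a.re ∈ Set.Ioo 0 2) (ha1 : a ≠ 1) :
    Complex.cos (Real.pi * a / 2) ≠ 0 := by
  rw [Complex.cos_ne_zero_iff]
  intro k hk
  have hak : a = ((2 * k + 1 : ℤ) : ℂ) := by
    have hpi : (Real.pi : ℂ) ≠ 0 := Complex.ofReal_ne_zero.2 Real.pi_ne_zero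
    push_cast
    field_simp at hk
    exact hk
  have hk0 : k = 0 := by
    rw [hak, Complex.intCast_re] at ha
    have h0 : 0 < 2 * k + 1 := by exact_mod_cast ha.1
    have h2 : 2 * k + 1 < 2 := by exact_mod_cast ha.2
    lia
  simp [hak, hk0] at ha1

lemma analyticAt_regularizedTan {a : ℂ} (ha : a.re ∈ Set.Ioo 0 2) :
    AnalyticAt ℂ regularizedTan a := by
  have hcos : Differentiable ℂ fun z : ℂ => Complex.cos (Real.pi * z / 2) := by fun_prop
  refine AnalyticAt.div (by fun_prop) (analyticAt_dslope_of_differentiable hcos 1 a) ?_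
  rcases eq_or_ne a 1 with rfl | ha1
  · intro h0
    have h1 := regularizedTan_one
    rw [regularizedTan, h0, div_zero] at h1
    simp [Real.pi_ne_zero] at h1
  · rw [dslope_of_ne _ ha1, slope_def_field, mul_one, Complex.cos_pi_div_two, sub_zero]
    exact div_ne_zero (cos_pi_mul_div_two_ne_zero ha ha1) (sub_ne_zero.2 ha1)

end RegularizedFactors

section Growth

lemma rpow_le_one_add_pow {x r : ℝ} {n : ℕ} (hx : 0 ≤ x) (hr : 0 ≤ r) (hrn : r ≤ n) :
    x ^ r ≤ (1 + x) ^ n :=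
  calc x ^ r ≤ (1 + x) ^ r := Real.rpow_le_rpow hx (by linarith) hr
    _ ≤ (1 + x) ^ (n : ℝ) := Real.rpow_le_rpow_of_exponent_le (by linarith) hrn
    _ = (1 + x) ^ n := Real.rpow_natCast _ n

lemma abs_log_mul_rpow_le {x r : ℝ} {n : ℕ} (hx : 0 < x) (hr : 0 < r) (hrn : r ≤ n) :
    |Real.log x| * x ^ r ≤ (r⁻¹ + 1) * (1 + x) ^ (n + 1) := by
  have hr0 : 0 < r⁻¹ := inv_pos.2 hr
  have hone : 1 ≤ (1 + x) ^ (n + 1) := one_le_pow₀ (by linarith)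
  rcases le_total x 1 with hx1 | hx1
  · calc |Real.log x| * x ^ r = |Real.log x * x ^ r| := by
          rw [abs_mul, abs_of_nonneg (Real.rpow_nonneg hx.le r)]
      _ ≤ 1 / r := (Real.abs_log_mul_self_rpow_lt x r hx hx1 hr).le
      _ ≤ (r⁻¹ + 1) * (1 + x) ^ (n + 1) := by rw [one_div]; nlinarith
  · have hlog : |Real.log x| ≤ 1 + x := by
      rw [abs_of_nonneg (Real.log_nonneg hx1)]
      linarith [Real.log_le_sub_one_of_pos hx]
    calc |Real.log x| * x ^ r ≤ (1 + x) * (1 + x) ^ n :=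
          mul_le_mul hlog (rpow_le_one_add_pow hx.le hr.le hrn) (by positivity) (by positivity)
      _ ≤ (r⁻¹ + 1) * (1 + x) ^ (n + 1) := by rw [← pow_succ']; nlinarith

lemma norm_exp_mul_add_log {t : ℝ} (ht : t ≠ 0) (a c : ℂ) :
    ‖Complex.exp (a * (c + Real.log |t|))‖ = ‖Complex.exp (a * c)‖ * |t| ^ a.re := by
  rw [mul_add, Complex.exp_add, norm_mul, Complex.norm_exp (a * (Real.log |t| : ℂ)),
    Complex.re_mul_ofReal, mul_comm a.re, Real.rpow_def_of_pos (abs_pos.2 ht)]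

/-- The constant in the polynomial bound on `‖L * exp (a * L)‖`, where `L = c + log |t|`. -/
noncomputable def logPowerConst (a c : ℂ) : ℝ :=
  ‖Complex.exp (a * c)‖ * (‖c‖ + a.re⁻¹ + 1)

lemma continuousAt_logPowerConst {E : Type*} [TopologicalSpace E] {a c : E → ℂ} {z : E}
    (ha : ContinuousAt a z) (hc : ContinuousAt c z) (h0 : (a z).re ≠ 0) :
    ContinuousAt (fun w => logPowerConst (a w) (c w)) z := by
  have hre : ContinuousAt (fun w => (a w).re) z := Complex.continuous_re.continuousAt.comp ha
  exact (ha.mul hc).cexp.norm.mul ((hc.norm.add (hre.inv₀ h0)).add continuousAt_const)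

lemma norm_mul_exp_mul_add_log_le {t : ℝ} (ht : t ≠ 0) {a : ℂ} {n : ℕ} (ha : 0 < a.re)
    (han : a.re ≤ n) (c : ℂ) :
    ‖(c + Real.log |t|) * Complex.exp (a * (c + Real.log |t|))‖ ≤
      logPowerConst a c * (1 + |t|) ^ (n + 1) := by
  have hpow : |t| ^ a.re ≤ (1 + |t|) ^ (n + 1) :=
    rpow_le_one_add_pow (abs_nonneg t) ha.le (by push_cast; linarith)
  have hlog := abs_log_mul_rpow_le (abs_pos.2 ht) ha han
  calc ‖(c + Real.log |t|) * Complex.exp (a * (c + Real.log |t|))‖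
      ≤ (‖c‖ + |Real.log (|t|)|) * (‖Complex.exp (a * c)‖ * |t| ^ a.re) := by
        rw [norm_mul, norm_exp_mul_add_log ht]
        gcongr
        exact norm_add_le_of_le le_rfl (Complex.norm_real _).le
    _ = ‖Complex.exp (a * c)‖ * (‖c‖ * |t| ^ a.re + |Real.log (|t|)| * |t| ^ a.re) := by ring
    _ ≤ ‖Complex.exp (a * c)‖ *
          (‖c‖ * (1 + |t|) ^ (n + 1) + (a.re⁻¹ + 1) * (1 + |t|) ^ (n + 1)) :=
        mul_le_mul_of_nonneg_left
          (add_le_add (mul_le_mul_of_nonneg_left hpow (norm_nonneg c)) hlog) (norm_nonneg _)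
    _ = logPowerConst a c * (1 + |t|) ^ (n + 1) := by rw [logPowerConst]; ring

lemma norm_expSecant_add_log_le {t : ℝ} (ht : t ≠ 0) {a : ℂ} {n : ℕ} (hn : 1 ≤ n) (ha : 0 < a.re)
    (han : a.re ≤ n) (c : ℂ) :
    ‖expSecant a (c + Real.log |t|)‖ ≤
      (logPowerConst 1 c + logPowerConst a c) * (1 + |t|) ^ (n + 1) := by
  have hone := norm_mul_exp_mul_add_log_le (a := 1) ht (by simp) (Nat.one_le_cast.2 hn) c
  rw [one_mul] at hone
  rw [add_mul]
  exact (norm_expSecant_le _ _).trans (add_le_add hone (norm_mul_exp_mul_add_log_le ht ha han c))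

end Growth

section Cumulant

/-- The complex parameters `(μ, σ, α, β)` to which the cumulant extends analytically. -/
def cumulantDomain : Set (Fin 4 → ℂ) :=
  {z | 0 < (z 1).re ∧ (z 2).re ∈ Set.Ioo 0 2}

/-- The analytic extension of `log |σ t|` to complex `σ = z 1`. -/
noncomputable def logScale (t : ℝ) (z : Fin 4 → ℂ) : ℂ :=
  Complex.log (z 1) + Real.log |t|

/-- The analytic extension of the cumulant `psiM` to complex parameters, written without the case
distinction at `α = 1`. -/
noncomputable def cumulant (t : ℝ) (z : Fin 4 → ℂ) : ℂ :=
  Complex.I * z 0 * t - Complex.exp (z 2 * logScale t z) +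
    Complex.I * z 3 * Real.sign t * (regularizedTan (z 2) * expSecant (z 2) (logScale t z))

lemma isOpen_cumulantDomain : IsOpen cumulantDomain :=
  (isOpen_Ioi.preimage (Complex.continuous_re.comp (continuous_apply 1))).inter
    (isOpen_Ioo.preimage (Complex.continuous_re.comp (continuous_apply 2)))

lemma analyticOnNhd_cumulant (t : ℝ) : AnalyticOnNhd ℂ (cumulant t) cumulantDomain := by
  intro z hz
  have hcoord (i : Fin 4) : AnalyticAt ℂ (fun w : Fin 4 → ℂ => w i) z :=
    (ContinuousLinearMap.proj (R := ℂ) (φ := fun _ : Fin 4 => ℂ) i).analyticAt z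
  have hlog : AnalyticAt ℂ (logScale t) z :=
    ((hcoord 1).clog (Or.inl hz.1)).add analyticAt_const
  have htan : AnalyticAt ℂ (fun w : Fin 4 → ℂ => regularizedTan (w 2)) z :=
    (analyticAt_regularizedTan hz.2).comp_of_eq (hcoord 2) rfl
  exact (((analyticAt_const.mul (hcoord 0)).mul analyticAt_const).sub
    ((hcoord 2).mul hlog).cexp).add (((analyticAt_const.mul (hcoord 3)).mul analyticAt_const).mul
      (htan.mul (analyticAt_expSecant (hcoord 2) hlog)))

lemma logScale_ofReal_comp {θ : Fin 4 → ℝ} (hσ : 0 < θ 1) {t : ℝ} (ht : t ≠ 0) :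
    logScale t (Complex.ofReal ∘ θ) = Real.log |θ 1 * t| := by
  rw [abs_mul, Real.log_mul (abs_ne_zero.2 hσ.ne') (abs_ne_zero.2 ht), abs_of_pos hσ]
  simp [logScale, Complex.ofReal_log hσ.le]

lemma sign_mul_abs_self (t : ℝ) : Real.sign t * |t| = t := by
  rcases lt_trichotomy t 0 with h | rfl | h
  · rw [Real.sign_of_neg h, abs_of_neg h, neg_one_mul, neg_neg]
  · simp
  · rw [Real.sign_of_pos h, abs_of_pos h, one_mul]

lemma psiM_eq_cumulant {θ : Fin 4 → ℝ} (hσ : 0 < θ 1) {t : ℝ} (ht : t ≠ 0) :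
    psiM θ t = cumulant t (Complex.ofReal ∘ θ) := by
  set u : ℝ := |θ 1 * t| with hu
  have hu0 : 0 < u := abs_pos.2 (mul_ne_zero hσ.ne' ht)
  have hexp (a : ℝ) : Complex.exp (a * Real.log u) = (u ^ a : ℝ) := by
    rw [Real.rpow_def_of_pos hu0, mul_comm (Real.log u)]
    push_cast
    rfl
  have hexp1 : Complex.exp (Real.log u) = u := by
    simpa using hexp 1
  have hsign : Real.sign t * u = θ 1 * t := by
    rw [hu, abs_mul, abs_of_pos hσ, mul_left_comm, sign_mul_abs_self]
  rw [cumulant, logScale_ofReal_comp hσ ht, ← hu]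
  simp only [Function.comp_apply, hexp]
  by_cases hα : θ 2 = 1
  · have hsignC : (Real.sign t : ℂ) * u = θ 1 * t := by exact_mod_cast hsign
    rw [psiM, if_pos hα, ← hu, hα, Complex.ofReal_one, regularizedTan_one, expSecant_one, hexp1]
    push_cast
    rw [Real.rpow_one]
    linear_combination Complex.I * (2 * θ 3 / Real.pi) * Real.log u * hsignC
  · have hαC : (θ 2 : ℂ) ≠ 1 := by exact_mod_cast hα
    have hrpow : (u ^ θ 2 : ℝ) * (u ^ (1 - θ 2) : ℝ) = (u : ℂ) := by
      rw [← Complex.ofReal_mul, ← Real.rpow_add hu0, add_sub_cancel, Real.rpow_one]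
    have hsecant : (θ 2 - 1 : ℂ) * expSecant (θ 2) (Real.log u) = (u ^ θ 2 : ℝ) - u := by
      rw [sub_one_mul_expSecant, hexp, hexp1]
    rw [psiM, if_neg hα, ← hu, regularizedTan_of_ne_one hαC]
    push_cast at hrpow hsecant ⊢
    linear_combination
      -(Complex.I * θ 3 * Real.sign t * Complex.tan (Real.pi * θ 2 / 2)) * (hrpow + hsecant)

lemma phiM_eq_exp_cumulant {θ : Fin 4 → ℝ} (hσ : 0 < θ 1) {t : ℝ} (ht : t ≠ 0) :
    phiM θ t = Complex.exp (cumulant t (Complex.ofReal ∘ θ)) := by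
  rw [phiM, psiM_eq_cumulant hσ ht]

lemma norm_phiM (θ : Fin 4 → ℝ) (t : ℝ) : ‖phiM θ t‖ = Real.exp (-|θ 1 * t| ^ θ 2) := by
  rw [phiM, Complex.norm_exp, psiM]
  split_ifs with hα
  · simp [hα]
  · simp only [Complex.add_re, Complex.re_ofReal_mul, Complex.one_re, Complex.I_mul_re,
      Complex.ofReal_im, neg_zero, add_zero, mul_one]

/-- The constant in the cubic bound on the cumulant as a function of `t`. -/
noncomputable def cumulantConst (z : Fin 4 → ℂ) : ℝ :=
  ‖z 0‖ + ‖Complex.exp (z 2 * Complex.log (z 1))‖ + ‖z 3‖ * (‖regularizedTan (z 2)‖ *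
    (logPowerConst 1 (Complex.log (z 1)) + logPowerConst (z 2) (Complex.log (z 1))))

lemma continuousOn_cumulantConst : ContinuousOn cumulantConst cumulantDomain := by
  intro z hz
  have hcoord (i : Fin 4) : ContinuousAt (fun w : Fin 4 → ℂ => w i) z := continuousAt_apply i z
  have hlog := (hcoord 1).clog (Or.inl hz.1)
  have htan : ContinuousAt (fun w : Fin 4 → ℂ => regularizedTan (w 2)) z :=
    (analyticAt_regularizedTan hz.2).continuousAt.comp_of_eq (hcoord 2) rfl
  have hone := continuousAt_logPowerConst continuousAt_const hlog (Complex.one_re ▸ one_ne_zero)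
  have hpow := continuousAt_logPowerConst (hcoord 2) hlog hz.2.1.ne'
  exact (((hcoord 0).norm.add ((hcoord 2).mul hlog).cexp.norm).add
    ((hcoord 3).norm.mul (htan.norm.mul (hone.add hpow)))).continuousWithinAt

lemma norm_cumulant_le {z : Fin 4 → ℂ} (hα : (z 2).re ∈ Set.Ioo 0 2) {t : ℝ} (ht : t ≠ 0) :
    ‖cumulant t z‖ ≤ cumulantConst z * (1 + |t|) ^ 3 := by
  have hdrift : ‖Complex.I * z 0 * t‖ ≤ ‖z 0‖ * (1 + |t|) ^ 3 := by
    have ht3 : |t| ≤ (1 + |t|) ^ 3 := by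
      simpa using rpow_le_one_add_pow (abs_nonneg t) zero_le_one (n := 3) (by norm_num)
    rw [norm_mul, norm_mul, Complex.norm_I, one_mul, Complex.norm_real]
    exact mul_le_mul_of_nonneg_left ht3 (norm_nonneg _)
  have hpower : ‖Complex.exp (z 2 * logScale t z)‖ ≤
      ‖Complex.exp (z 2 * Complex.log (z 1))‖ * (1 + |t|) ^ 3 := by
    rw [logScale, norm_exp_mul_add_log ht]
    have ht3 : |t| ^ (z 2).re ≤ (1 + |t|) ^ 3 :=
      rpow_le_one_add_pow (abs_nonneg t) hα.1.le (by push_cast; linarith [hα.2])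
    exact mul_le_mul_of_nonneg_left ht3 (norm_nonneg _)
  have hsign : ‖(Real.sign t : ℂ)‖ = 1 := by
    rcases Real.sign_apply_eq_of_ne_zero t ht with h | h <;> simp [h]
  calc ‖cumulant t z‖
      ≤ ‖Complex.I * z 0 * t‖ + ‖Complex.exp (z 2 * logScale t z)‖ +
          ‖z 3‖ * (‖regularizedTan (z 2)‖ * ‖expSecant (z 2) (logScale t z)‖) := by
        refine (norm_add_le _ _).trans (add_le_add (norm_sub_le _ _) (le_of_eq ?_))
        rw [norm_mul, norm_mul, norm_mul, norm_mul, Complex.norm_I, one_mul, hsign, mul_one]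
    _ ≤ ‖z 0‖ * (1 + |t|) ^ 3 + ‖Complex.exp (z 2 * Complex.log (z 1))‖ * (1 + |t|) ^ 3 +
          ‖z 3‖ * (‖regularizedTan (z 2)‖ * ((logPowerConst 1 (Complex.log (z 1)) +
            logPowerConst (z 2) (Complex.log (z 1))) * (1 + |t|) ^ 3)) := by
        gcongr
        exact norm_expSecant_add_log_le (n := 2) ht one_le_two hα.1 (by exact_mod_cast hα.2.le) _
    _ = cumulantConst z * (1 + |t|) ^ 3 := by rw [cumulantConst]; ring

lemma isLocallyDominated_cumulant :
    IsLocallyDominated (fun t : {t : ℝ // t ≠ 0} => cumulant t) (fun t => (1 + |(t : ℝ)|) ^ 3)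
      cumulantDomain :=
  isLocallyDominated_of_le_mul continuousOn_cumulantConst (fun _ => by positivity)
    fun t _ hz => norm_cumulant_le hz.2 t.2

end Cumulant

section Decay

lemma rpow_le_rpow_add_one {x y p q : ℝ} (hx : 0 ≤ x) (hxy : x ≤ y) (hp : 0 ≤ p) (hpq : p ≤ q) :
    x ^ p ≤ y ^ q + 1 := by
  have hy : 0 ≤ y ^ q := Real.rpow_nonneg (hx.trans hxy) q
  rcases le_total x 1 with hx1 | hx1
  · linarith [Real.rpow_le_one hx hx1 hp]
  · calc x ^ p ≤ x ^ q := Real.rpow_le_rpow_of_exponent_le hx1 hpq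
      _ ≤ y ^ q := Real.rpow_le_rpow hx hxy (hp.trans hpq)
      _ ≤ y ^ q + 1 := by linarith

lemma integrable_one_add_abs_pow_mul_exp_neg_rpow {c p : ℝ} (hc : 0 < c) (hp : 0 < p) (n : ℕ) :
    Integrable fun t : ℝ => (1 + |t|) ^ n * Real.exp (-(c * |t|) ^ p) := by
  have hhalf : IntegrableOn (fun x : ℝ => (1 + x) ^ n * Real.exp (-(c * x) ^ p)) (Set.Ioi 0) := by
    have hterm (m : ℕ) : IntegrableOn (fun x : ℝ => x ^ (m : ℝ) * Real.exp (-c ^ p * x ^ p))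
        (Set.Ioi 0) :=
      integrableOn_rpow_mul_exp_neg_mul_rpow (by linarith [m.cast_nonneg (α := ℝ)]) hp
        (Real.rpow_pos_of_pos hc p)
    refine IntegrableOn.congr_fun (integrable_finsetSum (Finset.range (n + 1)) fun m _ =>
      (hterm m).mul_const (n.choose m : ℝ)) (fun x hx => ?_) measurableSet_Ioi
    rw [add_comm 1 x, add_pow, Finset.sum_mul, Real.mul_rpow hc.le (Set.mem_Ioi.1 hx).le]
    simp only [one_pow, mul_one, Real.rpow_natCast, neg_mul]
    exact Finset.sum_congr rfl fun m _ => by ring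
  simpa using (integrable_fun_norm_addHaar (volume : Measure ℝ)
    (f := fun x : ℝ => (1 + x) ^ n * Real.exp (-(c * x) ^ p))).2 (by simpa using hhalf)

lemma exists_norm_phiM_le {K : Set (Fin 4 → ℝ)} (hK : IsCompact K)
    (hKΩ : ∀ θ ∈ K, Complex.ofReal ∘ θ ∈ cumulantDomain) :
    ∃ c > 0, ∃ p > (0 : ℝ), ∀ θ ∈ K, ∀ t : ℝ,
      ‖phiM θ t‖ ≤ Real.exp 1 * Real.exp (-(c * |t|) ^ p) := by
  obtain ⟨c, hc, hcK⟩ := hK.exists_forall_le' (continuous_apply 1).continuousOn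
    (fun θ hθ => (hKΩ θ hθ).1)
  obtain ⟨p, hp, hpK⟩ := hK.exists_forall_le' (continuous_apply 2).continuousOn
    (fun θ hθ => (hKΩ θ hθ).2.1)
  refine ⟨c, hc, p, hp, fun θ hθ t => ?_⟩
  have hct : c * |t| ≤ |θ 1 * t| := by
    rw [abs_mul]
    exact mul_le_mul_of_nonneg_right ((hcK θ hθ).trans (le_abs_self _)) (abs_nonneg t)
  rw [norm_phiM, ← Real.exp_add, Real.exp_le_exp]
  linarith [rpow_le_rpow_add_one (by positivity) hct hp.le (hpK θ hθ)]

end Decay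

section ParameterDerivatives

variable {θ : Fin 4 → ℝ} {t : ℝ}

lemma hasDerivAt_phiM_update (hθ : Complex.ofReal ∘ θ ∈ cumulantDomain) (ht : t ≠ 0) (i : Fin 4) :
    HasDerivAt (fun s => phiM (Function.update θ i s) t)
      (phiM θ t * complexPartial i (cumulant t) (Complex.ofReal ∘ θ)) (θ i) := by
  have hΨ := (analyticOnNhd_cumulant t).differentiableOn
  rw [phiM_eq_exp_cumulant hθ.1 ht, ← complexPartial_cexp_comp
    (hΨ.differentiableAt (isOpen_cumulantDomain.mem_nhds hθ))]
  exact hasDerivAt_update_of_eqOn_comp_ofReal (g := fun η => phiM η t) isOpen_cumulantDomain hΨ.cexp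
    (fun η hη => phiM_eq_exp_cumulant hη.1 ht) hθ i

lemma phiP_eq (hθ : Complex.ofReal ∘ θ ∈ cumulantDomain) (ht : t ≠ 0) (i : Fin 4) :
    phiP i θ t = phiM θ t * complexPartial i (cumulant t) (Complex.ofReal ∘ θ) :=
  (hasDerivAt_phiM_update hθ ht i).deriv

lemma hasDerivAt_phiP_update (hθ : Complex.ofReal ∘ θ ∈ cumulantDomain) (ht : t ≠ 0)
    (i j : Fin 4) :
    HasDerivAt (fun s => phiP i (Function.update θ j s) t)
      (phiM θ t * (complexPartial j (complexPartial i (cumulant t)) (Complex.ofReal ∘ θ) +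
        complexPartial j (cumulant t) (Complex.ofReal ∘ θ) *
          complexPartial i (cumulant t) (Complex.ofReal ∘ θ))) (θ j) := by
  have hnhds := isOpen_cumulantDomain.mem_nhds hθ
  have hΨ := (analyticOnNhd_cumulant t).differentiableOn
  have hΨi := (analyticOnNhd_complexPartial (analyticOnNhd_cumulant t) i).differentiableOn
  convert hasDerivAt_update_of_eqOn_comp_ofReal (g := fun η => phiP i η t) isOpen_cumulantDomain
    (hΨ.cexp.mul hΨi)
    (fun η hη => by rw [phiP_eq hη ht, phiM_eq_exp_cumulant hη.1 ht, Pi.mul_apply])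
    hθ j using 1
  rw [complexPartial_mul (hΨ.cexp.differentiableAt hnhds) (hΨi.differentiableAt hnhds),
    complexPartial_cexp_comp (hΨ.differentiableAt hnhds), phiM_eq_exp_cumulant hθ.1 ht]
  ring

lemma phiPP_eq (hθ : Complex.ofReal ∘ θ ∈ cumulantDomain) (ht : t ≠ 0) (i j : Fin 4) :
    phiPP i j θ t = phiM θ t *
      (complexPartial j (complexPartial i (cumulant t)) (Complex.ofReal ∘ θ) +
        complexPartial j (cumulant t) (Complex.ofReal ∘ θ) *
          complexPartial i (cumulant t) (Complex.ofReal ∘ θ)) :=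
  (hasDerivAt_phiP_update hθ ht i j).deriv

end ParameterDerivatives

lemma exists_norm_complexPartial_cumulant_le {K : Set (Fin 4 → ℂ)} (hK : IsCompact K)
    (hKΩ : K ⊆ cumulantDomain) :
    ∃ C : ℝ, 0 ≤ C ∧ ∀ z ∈ K, ∀ t : ℝ, t ≠ 0 → ∀ i j,
      ‖complexPartial i (cumulant t) z‖ ≤ C * (1 + |t|) ^ 3 ∧
      ‖complexPartial j (complexPartial i (cumulant t)) z‖ ≤ C * (1 + |t|) ^ 3 := by
  have hfirst := isLocallyDominated_cumulant.partialDeriv isOpen_cumulantDomain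
    fun t => (analyticOnNhd_cumulant t).differentiableOn
  have hsecond := hfirst.partialDeriv isOpen_cumulantDomain fun q =>
    (analyticOnNhd_complexPartial (analyticOnNhd_cumulant q.2) q.1).differentiableOn
  obtain ⟨C₁, hC₁, hle₁⟩ := hfirst K hKΩ hK
  obtain ⟨C₂, -, hle₂⟩ := hsecond K hKΩ hK
  refine ⟨max C₁ C₂, le_max_of_le_left hC₁, fun z hz t ht i j => ⟨?_, ?_⟩⟩
  · exact (hle₁ (i, ⟨t, ht⟩) z hz).trans (by gcongr; exact le_max_left _ _)
  · exact (hle₂ (j, i, ⟨t, ht⟩) z hz).trans (by gcongr; exact le_max_right _ _)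

lemma exists_norm_deriv_factor_le {K : Set (Fin 4 → ℂ)} (hK : IsCompact K)
    (hKΩ : K ⊆ cumulantDomain) :
    ∃ C : ℝ, ∀ z ∈ K, ∀ t : ℝ, t ≠ 0 →
      (∀ i, ‖complexPartial i (cumulant t) z‖ ≤ C * (1 + |t|) ^ 6 ∧
        ‖t * complexPartial i (cumulant t) z‖ ≤ C * (1 + |t|) ^ 6) ∧
      ∀ i j, ‖complexPartial j (complexPartial i (cumulant t)) z +
        complexPartial j (cumulant t) z * complexPartial i (cumulant t) z‖ ≤
          C * (1 + |t|) ^ 6 := by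
  obtain ⟨C, hC, hle⟩ := exists_norm_complexPartial_cumulant_le hK hKΩ
  refine ⟨C + C ^ 2, fun z hz t ht => ?_⟩
  have hone : 1 ≤ 1 + |t| := by linarith [abs_nonneg t]
  have hcube : C * (1 + |t|) ^ 3 ≤ C * (1 + |t|) ^ 6 := by gcongr; norm_num
  have hsquare : 0 ≤ C ^ 2 * (1 + |t|) ^ 6 := by positivity
  refine ⟨fun i => ⟨?_, ?_⟩, fun i j => ?_⟩
  · linarith [(hle z hz t ht i i).1]
  · calc ‖t * complexPartial i (cumulant t) z‖ ≤ (1 + |t|) * (C * (1 + |t|) ^ 3) :=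
          norm_mul_le_of_le (by simp) (hle z hz t ht i i).1
      _ = C * (1 + |t|) ^ 4 := by ring
      _ ≤ C * (1 + |t|) ^ 6 := by gcongr; norm_num
      _ ≤ (C + C ^ 2) * (1 + |t|) ^ 6 := by linarith
  · calc ‖complexPartial j (complexPartial i (cumulant t)) z +
          complexPartial j (cumulant t) z * complexPartial i (cumulant t) z‖
        ≤ C * (1 + |t|) ^ 3 + C * (1 + |t|) ^ 3 * (C * (1 + |t|) ^ 3) :=
          norm_add_le_of_le (hle z hz t ht i j).2
            (norm_mul_le_of_le (hle z hz t ht j j).1 (hle z hz t ht i i).1)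
      _ = C * (1 + |t|) ^ 3 + C ^ 2 * (1 + |t|) ^ 6 := by ring
      _ ≤ (C + C ^ 2) * (1 + |t|) ^ 6 := by linarith

theorem phi_derivs_dominated_near_alpha_one_general {K : Set (Fin 4 → ℝ)} (hK : IsCompact K)
    (hKΘ : ∀ θ ∈ K, 0 < θ 1 ∧ θ 2 ∈ Set.Ioo 0 2) :
    ∃ h : ℝ → ℝ, Integrable h ∧ ∀ θ ∈ K, ∀ t ≠ 0,
      (∀ i, ‖phiP i θ t‖ ≤ h t ∧ ‖(t : ℂ) * phiP i θ t‖ ≤ h t) ∧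
      ∀ i j, ‖phiPP i j θ t‖ ≤ h t := by
  have hKΩ : (Complex.ofReal ∘ ·) '' K ⊆ cumulantDomain := Set.image_subset_iff.2 hKΘ
  obtain ⟨c, hc, p, hp, hφ⟩ := exists_norm_phiM_le hK hKΘ
  obtain ⟨C, hC⟩ := exists_norm_deriv_factor_le (hK.image (by fun_prop)) hKΩ
  refine ⟨fun t => Real.exp 1 * C * ((1 + |t|) ^ 6 * Real.exp (-(c * |t|) ^ p)),
    (integrable_one_add_abs_pow_mul_exp_neg_rpow hc hp 6).const_mul _, fun θ hθ t ht => ?_⟩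
  have hmajorant {x : ℂ} (hx : ‖x‖ ≤ C * (1 + |t|) ^ 6) :
      ‖phiM θ t * x‖ ≤ Real.exp 1 * C * ((1 + |t|) ^ 6 * Real.exp (-(c * |t|) ^ p)) :=
    (norm_mul_le_of_le (hφ θ hθ t) hx).trans_eq (by ring)
  obtain ⟨hfirst, hsecond⟩ := hC _ (Set.mem_image_of_mem _ hθ) t ht
  refine ⟨fun i => ?_, fun i j => ?_⟩
  · rw [phiP_eq (hKΘ θ hθ) ht, mul_left_comm]
    exact ⟨hmajorant (hfirst i).1, hmajorant (hfirst i).2⟩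
  · rw [phiPP_eq (hKΘ θ hθ) ht]
    exact hmajorant (hsecond i j)

/-- Integrable domination of the parameter derivatives of `φ` uniformly
in `α` near `1`: for fixed `μ ∈ ℝ`, `σ > 0`, `β ∈ (−1,1)`, there are `ε ∈ (0,1)` and an
integrable `h` dominating `|φ_α(t)|` for all `α` with `|α − 1| < ε`, `α ∈ (0,2)`, `t ≠ 0`;
and analogous integrable dominating functions exist for each `φ_{θᵢ}`, each `t·φ_{θᵢ}`,
and each `φ_{θᵢθⱼ}`. -/
theorem phi_derivs_dominated_near_alpha_one
    (μ σ β : ℝ) (hσ : 0 < σ) (hβ : β ∈ Set.Ioo (-1 : ℝ) 1) :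
    (∃ ε ∈ Set.Ioo (0 : ℝ) 1, ∃ h : ℝ → ℝ, MeasureTheory.Integrable h ∧
      ∀ α : ℝ, |α - 1| < ε → α ∈ Set.Ioo (0 : ℝ) 2 → ∀ t : ℝ, t ≠ 0 →
        ‖phiP 2 ![μ, σ, α, β] t‖ ≤ h t) ∧
    (∀ i : Fin 4, ∃ ε ∈ Set.Ioo (0 : ℝ) 1, ∃ h : ℝ → ℝ, MeasureTheory.Integrable h ∧
      ∀ α : ℝ, |α - 1| < ε → α ∈ Set.Ioo (0 : ℝ) 2 → ∀ t : ℝ, t ≠ 0 →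
        ‖phiP i ![μ, σ, α, β] t‖ ≤ h t) ∧
    (∀ i : Fin 4, ∃ ε ∈ Set.Ioo (0 : ℝ) 1, ∃ h : ℝ → ℝ, MeasureTheory.Integrable h ∧
      ∀ α : ℝ, |α - 1| < ε → α ∈ Set.Ioo (0 : ℝ) 2 → ∀ t : ℝ, t ≠ 0 →
        ‖(t : ℂ) * phiP i ![μ, σ, α, β] t‖ ≤ h t) ∧
    (∀ i j : Fin 4, ∃ ε ∈ Set.Ioo (0 : ℝ) 1, ∃ h : ℝ → ℝ, MeasureTheory.Integrable h ∧
      ∀ α : ℝ, |α - 1| < ε → α ∈ Set.Ioo (0 : ℝ) 2 → ∀ t : ℝ, t ≠ 0 →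
        ‖phiPP i j ![μ, σ, α, β] t‖ ≤ h t) := by
  have hcurve : Continuous fun α : ℝ => ![μ, σ, α, β] := by fun_prop
  obtain ⟨h, hh, hle⟩ := phi_derivs_dominated_near_alpha_one_general
    (isCompact_Icc.image hcurve : IsCompact ((fun α => ![μ, σ, α, β]) '' Set.Icc (1 / 2) (3 / 2)))
    (Set.forall_mem_image.2 fun α hα =>
      ⟨hσ, show 0 < α by linarith [hα.1], show α < 2 by linarith [hα.2]⟩)
  have hmem (α : ℝ) (hα : |α - 1| < 1 / 2) :
      ![μ, σ, α, β] ∈ (fun α => ![μ, σ, α, β]) '' Set.Icc (1 / 2) (3 / 2) := by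
    obtain ⟨hlo, hhi⟩ := abs_lt.1 hα
    exact Set.mem_image_of_mem _ ⟨by linarith, by linarith⟩
  have hε : (1 / 2 : ℝ) ∈ Set.Ioo 0 1 := by norm_num
  exact ⟨⟨_, hε, h, hh, fun α hα _ t ht => ((hle _ (hmem α hα) t ht).1 2).1⟩,
    fun i => ⟨_, hε, h, hh, fun α hα _ t ht => ((hle _ (hmem α hα) t ht).1 i).1⟩,
    fun i => ⟨_, hε, h, hh, fun α hα _ t ht => ((hle _ (hmem α hα) t ht).1 i).2⟩,
    fun i j => ⟨_, hε, h, hh, fun α hα _ t ht => (hle _ (hmem α hα) t ht).2 i j⟩⟩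
end
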